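/- Let n ≥ 2 be fixed and let α > 0 satisfy α < 1/√5 if n = 2, and α < n/√(n⁴ + 2n³ − 2n) if n ≥ 3. Let (Y_d)_{d≥1} be a unitarily invariant sequence of random self-adjoint matrices Y_d ∈ M_n(ℂ) ⊗ M_d(ℂ) converging strongly to the semicircular distribution SC_{2,α} (for instance Y_d = 2·I_{nd} + α·X_d with X_d a standard GUE matrix). Then almost surely, for all sufficiently large d, Y_d ∈ SEP_{n,d}; in particular lim_{d→∞} P(Y_d ∈ SEP_{n,d}) = 1. -/

import Mathlib

open MeasureTheory Filter Topology Polynomial Matrix Kronecker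
open scoped ComplexOrder

noncomputable section

/-- Measurable space structure on matrices (entrywise). -/
instance matMS (m n : Type*) : MeasurableSpace (Matrix m n ℂ) :=
  inferInstanceAs (MeasurableSpace (m → n → ℂ))

/-- The ℓ²→ℓ² operator norm of a complex square matrix. -/
def opNorm {N : Type*} [Fintype N] [DecidableEq N] (X : Matrix N N ℂ) : ℝ :=
  ‖Matrix.toEuclideanCLM (𝕜 := ℂ) (n := N) X‖

/-- Application of a real polynomial to a complex square matrix. -/
def polyApply {N : Type*} [Fintype N] [DecidableEq N] (P : Polynomial ℝ)
    (X : Matrix N N ℂ) : Matrix N N ℂ :=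
  Polynomial.aeval X (P.map (algebraMap ℝ ℂ))

/-- The (topological) support of a measure on ℝ: points all of whose open
neighbourhoods have positive measure. -/
def msupport (μ : Measure ℝ) : Set ℝ :=
  {x | ∀ U : Set ℝ, IsOpen U → x ∈ U → 0 < μ U}

/-- Strong convergence of a sequence of random matrices `X d ∈ M_n(ℂ) ⊗ M_d(ℂ)`
towards a compactly supported probability measure `μ`: almost surely, for every
real polynomial `P`, the normalized traces of `P(X d)` converge to `∫ P dμ` and the
operator norms of `P(X d)` converge to `sup {|P(x)| : x ∈ supp μ}`. -/
def StrongConv {Ω : Type*} [MeasurableSpace Ω] (ℙ : Measure Ω) (n : ℕ)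
    (X : (d : ℕ) → Ω → Matrix (Fin n × Fin d) (Fin n × Fin d) ℂ)
    (μ : Measure ℝ) : Prop :=
  ∀ᵐ ω ∂ℙ, ∀ P : Polynomial ℝ,
    Tendsto (fun d : ℕ => ((n : ℂ) * (d : ℂ))⁻¹ * (polyApply P (X d ω)).trace) atTop
      (𝓝 ((∫ x, P.eval x ∂μ : ℝ) : ℂ)) ∧
    Tendsto (fun d : ℕ => opNorm (polyApply P (X d ω))) atTop
      (𝓝 (sSup ((fun x => |P.eval x|) '' msupport μ)))

/-- Unitary invariance of a sequence of random matrices: for every `d` and every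
unitary `U`, the random matrix `U (X d) U*` has the same distribution as `X d`. -/
def UnitInv {Ω : Type*} [MeasurableSpace Ω] (ℙ : Measure Ω) (n : ℕ)
    (X : (d : ℕ) → Ω → Matrix (Fin n × Fin d) (Fin n × Fin d) ℂ) : Prop :=
  ∀ d : ℕ, ∀ U : Matrix (Fin n × Fin d) (Fin n × Fin d) ℂ,
    U ∈ unitary (Matrix (Fin n × Fin d) (Fin n × Fin d) ℂ) →
    Measure.map (fun ω => U * X d ω * star U) ℙ = Measure.map (X d) ℙ

/-- The separable cone `SEP_{n,d}`. -/
def SEP (n d : ℕ) : Set (Matrix (Fin n × Fin d) (Fin n × Fin d) ℂ) :=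
  {X | ∃ (k : ℕ) (A : Fin k → Matrix (Fin n) (Fin n) ℂ)
      (B : Fin k → Matrix (Fin d) (Fin d) ℂ),
    (∀ i, (A i).PosSemidef) ∧ (∀ i, (B i).PosSemidef) ∧ X = ∑ i, A i ⊗ₖ B i}

/-- The partial transpose on `M_n(ℂ) ⊗ M_d(ℂ)`: transposition of the first factor. -/
def ptrans {n d : ℕ} (X : Matrix (Fin n × Fin d) (Fin n × Fin d) ℂ) :
    Matrix (Fin n × Fin d) (Fin n × Fin d) ℂ :=
  fun p q => X (q.1, p.2) (p.1, q.2)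

/-- The PPT cone `PPT_{n,d}`: positive semidefinite matrices with positive
semidefinite partial transpose. -/
def PPT (n d : ℕ) : Set (Matrix (Fin n × Fin d) (Fin n × Fin d) ℂ) :=
  {X | X.PosSemidef ∧ (ptrans X).PosSemidef}

/-- The semicircular distribution `SC_{m,σ}` with mean `m` and variance `σ²`:
density `√(4σ² − (x−m)²)/(2πσ²)` on `[m−2σ, m+2σ]`. -/
def SC (m σ : ℝ) : Measure ℝ :=
  MeasureTheory.volume.withDensity (fun x => ENNReal.ofReal
    (Set.indicator (Set.Icc (m - 2 * σ) (m + 2 * σ))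
      (fun y => Real.sqrt (4 * σ ^ 2 - (y - m) ^ 2) / (2 * Real.pi * σ ^ 2)) x))

/-!
Strong convergence of the norms puts `Y_d` within any distance larger than `2α` of `2 • 1`, and the
thresholds imply `n * α < 1`, so it suffices that a Hermitian `X` with `n * ‖X - m • 1‖ ≤ m` is
separable. A Hermitian contraction is the average of a unitary `U` and its adjoint, so by scaling
this reduces to the separability of `2n • 1 + U + Uᴴ`. With `U i j` the blocks of `U`, this matrix
is the sum over ordered pairs `(i, j)` of the matrices `[[1, U i j], [(U i j)ᴴ, 1]]` placed on the
block rows and columns `i` and `j`. Up to a permutation of block columns, `U i j` is a compression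
of a unitary; compressing the spectral resolution of that unitary gives `U i j = ∑ z • Q z` with
`|z| = 1`, `Q z ≥ 0` and `∑ Q z = 1`, whence `[[1, U i j], [(U i j)ᴴ, 1]]` is the sum of the
product matrices `[[1, z], [conj z, 1]] ⊗ Q z`.
-/

open scoped Matrix.Norms.L2Operator MatrixOrder

section SpectralResolution

variable {N : Type*} [Fintype N] [DecidableEq N]

/-- The spectral projection of a normal matrix `A` onto its eigenspace at `z`, as the functional
calculus of the indicator function of `{z}`. It is `0` when `A` is not normal. -/
def spectralProj (A : Matrix N N ℂ) (z : ℂ) : Matrix N N ℂ :=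
  cfc (fun w => if w = z then (1 : ℂ) else 0) A

lemma posSemidef_spectralProj (A : Matrix N N ℂ) (z : ℂ) : (spectralProj A z).PosSemidef := by
  rw [← nonneg_iff_posSemidef]
  exact cfc_nonneg fun w _ => by split_ifs <;> simp

lemma cfc_eq_sum_smul_spectralProj (f : ℂ → ℂ) (A : Matrix N N ℂ) :
    cfc f A = ∑ z ∈ A.finite_spectrum.toFinset, f z • spectralProj A z := by
  have hc (g : ℂ → ℂ) : ContinuousOn g (spectrum ℂ A) := A.finite_spectrum.continuousOn g
  simp only [spectralProj, ← cfc_smul _ _ _ (hc _), ← cfc_sum _ _ _ fun _ _ => hc _]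
  refine cfc_congr fun w hw => ?_
  simp [Finset.sum_apply, hw]

lemma sum_spectralProj (A : Matrix N N ℂ) [IsStarNormal A] :
    ∑ z ∈ A.finite_spectrum.toFinset, spectralProj A z = 1 := by
  simpa [cfc_const_one ℂ A] using (cfc_eq_sum_smul_spectralProj (fun _ => 1) A).symm

lemma sum_smul_spectralProj (A : Matrix N N ℂ) [IsStarNormal A] :
    ∑ z ∈ A.finite_spectrum.toFinset, z • spectralProj A z = A := by
  simpa [cfc_id' ℂ A] using (cfc_eq_sum_smul_spectralProj (fun z => z) A).symm

end SpectralResolution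

lemma submatrix_id_mem_unitary {N : Type*} [Fintype N] [DecidableEq N] {U : Matrix N N ℂ}
    (hU : U ∈ unitary (Matrix N N ℂ)) (σ : Equiv.Perm N) :
    U.submatrix id σ ∈ unitary (Matrix N N ℂ) := by
  refine mem_unitaryGroup_iff'.2 ?_
  rw [star_eq_conjTranspose, conjTranspose_submatrix,
    ← submatrix_mul _ _ σ id σ Function.bijective_id, ← star_eq_conjTranspose,
    mem_unitaryGroup_iff'.1 hU, submatrix_one_equiv]

lemma exists_unitary_eq_half_add_star {A : Type*} [CStarAlgebra A] {a : A} (ha : IsSelfAdjoint a)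
    (ha1 : ‖a‖ ≤ 1) : ∃ u ∈ unitary A, a = (2⁻¹ : ℝ) • (u + star u) := by
  let _ := CStarAlgebra.spectralOrder A
  let _ := CStarAlgebra.spectralOrderedRing A
  let u := selfAdjoint.unitarySelfAddISMul ⟨a, ha⟩ ha1
  have hre : a = realPart (u : A) :=
    congrArg Subtype.val (selfAdjoint.realPart_unitarySelfAddISMul ⟨a, ha⟩ ha1).symm
  exact ⟨u, u.2, hre.trans (realPart_apply_coe _)⟩

section KroneckerSum

variable {α l m p q ι : Type*} [NonUnitalNonAssocSemiring α]

lemma kronecker_sum (A : Matrix l m α) (s : Finset ι) (B : ι → Matrix p q α) :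
    A ⊗ₖ (∑ k ∈ s, B k) = ∑ k ∈ s, A ⊗ₖ B k := by
  ext
  simp [Matrix.sum_apply, Finset.mul_sum]

lemma sum_kronecker (s : Finset ι) (A : ι → Matrix l m α) (B : Matrix p q α) :
    (∑ k ∈ s, A k) ⊗ₖ B = ∑ k ∈ s, A k ⊗ₖ B := by
  ext
  simp [Matrix.sum_apply, Finset.sum_mul]

end KroneckerSum

section Separable

variable {n d : ℕ}

/-- The separable cone `SEP n d`, bundled as a pointed convex cone. -/
def sepCone (n d : ℕ) : PointedCone ℝ (Matrix (Fin n × Fin d) (Fin n × Fin d) ℂ) where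
  carrier := SEP n d
  zero_mem' := ⟨0, Fin.elim0, Fin.elim0, fun i => i.elim0, fun i => i.elim0, by simp⟩
  add_mem' := by
    rintro _ _ ⟨k, A, B, hA, hB, rfl⟩ ⟨l, A', B', hA', hB', rfl⟩
    refine ⟨k + l, Fin.append A A', Fin.append B B', ?_, ?_, by simp [Fin.sum_univ_add]⟩ <;>
      refine fun i => i.addCases ?_ ?_ <;> simpa
  smul_mem' := by
    rintro ⟨r, hr⟩ _ ⟨k, A, B, hA, hB, rfl⟩
    exact ⟨k, fun i => r • A i, B, fun i => (hA i).smul hr, hB,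
      by simp [Finset.smul_sum, smul_kronecker]⟩

lemma kronecker_mem_sepCone {A : Matrix (Fin n) (Fin n) ℂ} {B : Matrix (Fin d) (Fin d) ℂ}
    (hA : A.PosSemidef) (hB : B.PosSemidef) : A ⊗ₖ B ∈ sepCone n d :=
  ⟨1, fun _ => A, fun _ => B, fun _ => hA, fun _ => hB, by simp⟩

lemma one_mem_sepCone : 1 ∈ sepCone n d := by
  rw [← one_kronecker_one]
  exact kronecker_mem_sepCone .one .one

/-- The matrix `[[1, B], [Bᴴ, 1]]` supported on the block rows and columns `i` and `j`. Blocks that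
overlap, when `i = j`, are added up. -/
def pairBlock (i j : Fin n) (B : Matrix (Fin d) (Fin d) ℂ) :
    Matrix (Fin n × Fin d) (Fin n × Fin d) ℂ :=
  (single i i 1 + single j j 1) ⊗ₖ 1 + single i j 1 ⊗ₖ B + single j i 1 ⊗ₖ Bᴴ

lemma vecMulVec_star_single_add_single {m : Type*} [DecidableEq m] (i j : m) {z : ℂ}
    (hz : ‖z‖ = 1) :
    vecMulVec (Pi.single i z + Pi.single j 1) (star (Pi.single i z + Pi.single j 1) : m → ℂ) =
      single i i 1 + single j j 1 + z • single i j 1 + star z • single j i 1 := by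
  have hzz : z * star z = 1 := by
    rw [Complex.star_def, Complex.mul_conj', hz]
    simp
  have hsingle (k l : m) (x y : ℂ) :
      vecMulVec (Pi.single k x) (Pi.single l y) = single k l (x * y) := by
    ext a b
    simp only [vecMulVec_apply, Pi.single_apply, single_apply]
    split_ifs <;> simp_all
  simp only [star_add, Pi.star_single, star_one, add_vecMulVec, vecMulVec_add, hsingle, mul_one,
    one_mul, hzz, smul_single, smul_eq_mul]
  abel

lemma pairBlock_sum_smul_mem_sepCone (i j : Fin n) {s : Finset ℂ} (hs : ∀ z ∈ s, ‖z‖ = 1)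
    {Q : ℂ → Matrix (Fin d) (Fin d) ℂ} (hQ : ∀ z, (Q z).PosSemidef) (hQ1 : ∑ z ∈ s, Q z = 1) :
    pairBlock i j (∑ z ∈ s, z • Q z) ∈ sepCone n d := by
  have hstar : (∑ z ∈ s, z • Q z)ᴴ = ∑ z ∈ s, star z • Q z := by
    simp only [conjTranspose_sum, conjTranspose_smul, (hQ _).isHermitian.eq]
  have hdecomp : pairBlock i j (∑ z ∈ s, z • Q z) = ∑ z ∈ s,
      vecMulVec (Pi.single i z + Pi.single j 1) (star (Pi.single i z + Pi.single j 1)) ⊗ₖ Q z := by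
    rw [pairBlock, hstar, ← hQ1]
    simp only [kronecker_sum, ← Finset.sum_add_distrib]
    refine Finset.sum_congr rfl fun z hz => ?_
    simp only [vecMulVec_star_single_add_single i j (hs z hz), add_kronecker, smul_kronecker,
      kronecker_smul]
  rw [hdecomp]
  exact sum_mem fun z _ => kronecker_mem_sepCone (posSemidef_vecMulVec_self_star _) (hQ z)

lemma pairBlock_compression_mem_sepCone (i j : Fin n) {N : Type*} [Fintype N] [DecidableEq N]
    {U : Matrix N N ℂ} (hU : U ∈ unitary (Matrix N N ℂ)) {f : Fin d → N} (hf : f.Injective) :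
    pairBlock i j (U.submatrix f f) ∈ sepCone n d := by
  have hnormal : IsStarNormal U := ⟨hU.1.trans hU.2.symm⟩
  set s := U.finite_spectrum.toFinset
  have hs : ∀ z ∈ s, ‖z‖ = 1 := fun z hz => by
    simpa using spectrum.subset_circle_of_unitary hU (U.finite_spectrum.mem_toFinset.1 hz)
  have hsum (c : ℂ → ℂ) : (∑ z ∈ s, c z • spectralProj U z).submatrix f f =
      ∑ z ∈ s, c z • (spectralProj U z).submatrix f f := by
    ext a b
    simp [Matrix.sum_apply]
  have hQ1 : ∑ z ∈ s, (spectralProj U z).submatrix f f = 1 := by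
    simpa [s, sum_spectralProj, submatrix_one _ hf] using (hsum fun _ => 1).symm
  have hQU : ∑ z ∈ s, z • (spectralProj U z).submatrix f f = U.submatrix f f := by
    rw [← hsum, sum_smul_spectralProj]
  rw [← hQU]
  exact pairBlock_sum_smul_mem_sepCone i j hs (fun z => (posSemidef_spectralProj U z).submatrix f)
    hQ1

lemma pairBlock_block_mem_sepCone (i j : Fin n) {U : Matrix (Fin n × Fin d) (Fin n × Fin d) ℂ}
    (hU : U ∈ unitary (Matrix (Fin n × Fin d) (Fin n × Fin d) ℂ)) :
    pairBlock i j (U.submatrix (Prod.mk i) (Prod.mk j)) ∈ sepCone n d := by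
  -- Swapping the block columns `i` and `j` moves the block at `(i, j)` to the diagonal.
  let σ : Equiv.Perm (Fin n × Fin d) := (Equiv.swap i j).prodCongr (Equiv.refl _)
  have hblock : (U.submatrix id σ).submatrix (Prod.mk i) (Prod.mk i) =
      U.submatrix (Prod.mk i) (Prod.mk j) := by
    ext a b
    simp [σ]
  rw [← hblock]
  exact pairBlock_compression_mem_sepCone i j (submatrix_id_mem_unitary hU σ)
    (Prod.mk_right_injective i)

lemma sum_single_kronecker_submatrix (X : Matrix (Fin n × Fin d) (Fin n × Fin d) ℂ) :
    ∑ i, ∑ j, single i j (1 : ℂ) ⊗ₖ X.submatrix (Prod.mk i) (Prod.mk j) = X := by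
  ext ⟨p, a⟩ ⟨q, b⟩
  simp [Matrix.sum_apply, kroneckerMap_apply, single_apply, ite_and]

lemma sum_pairBlock_submatrix (X : Matrix (Fin n × Fin d) (Fin n × Fin d) ℂ) :
    ∑ i, ∑ j, pairBlock i j (X.submatrix (Prod.mk i) (Prod.mk j)) =
      (2 * n : ℝ) • 1 + X + Xᴴ := by
  have hone : ∑ i : Fin n, single i i (1 : ℂ) ⊗ₖ (1 : Matrix (Fin d) (Fin d) ℂ) = 1 := by
    rw [← sum_kronecker, sum_single_one, one_kronecker_one]
  have hadj : ∑ i, ∑ j, single j i (1 : ℂ) ⊗ₖ (X.submatrix (Prod.mk i) (Prod.mk j))ᴴ = Xᴴ := by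
    rw [Finset.sum_comm]
    exact sum_single_kronecker_submatrix Xᴴ
  simp only [pairBlock, add_kronecker, Finset.sum_add_distrib, Finset.sum_const, Finset.card_univ,
    Fintype.card_fin, ← Finset.smul_sum, hone, sum_single_kronecker_submatrix, hadj]
  module

lemma smul_one_add_add_star_mem_sepCone {U : Matrix (Fin n × Fin d) (Fin n × Fin d) ℂ}
    (hU : U ∈ unitary (Matrix (Fin n × Fin d) (Fin n × Fin d) ℂ)) :
    (2 * n : ℝ) • 1 + U + star U ∈ sepCone n d := by
  rw [star_eq_conjTranspose, ← sum_pairBlock_submatrix]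
  exact sum_mem fun i _ => sum_mem fun j _ => pairBlock_block_mem_sepCone i j hU

lemma smul_one_add_mem_sepCone_of_norm_le_one {D : Matrix (Fin n × Fin d) (Fin n × Fin d) ℂ}
    (hD : D.IsHermitian) (hD1 : ‖D‖ ≤ 1) : (n : ℝ) • 1 + D ∈ sepCone n d := by
  obtain ⟨U, hU, hDU⟩ := exists_unitary_eq_half_add_star hD hD1
  have hhalf : (n : ℝ) • 1 + D = (2⁻¹ : ℝ) • ((2 * n : ℝ) • 1 + U + star U) := by
    rw [hDU]
    module
  rw [hhalf]
  exact (sepCone n d).smul_mem (by positivity) (smul_one_add_add_star_mem_sepCone hU)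

lemma mul_norm_smul_one_add_mem_sepCone {D : Matrix (Fin n × Fin d) (Fin n × Fin d) ℂ}
    (hD : D.IsHermitian) : (n * ‖D‖) • 1 + D ∈ sepCone n d := by
  have hscale : (n * ‖D‖) • 1 + D = ‖D‖ • ((n : ℝ) • 1 + NormedSpace.normalize D) := by
    rw [smul_add, NormedSpace.norm_smul_normalize, smul_smul, mul_comm]
  have hherm : (NormedSpace.normalize D).IsHermitian := (IsSelfAdjoint.all ‖D‖⁻¹).smul hD
  have hnorm : ‖NormedSpace.normalize D‖ ≤ 1 := by
    rw [NormedSpace.normalize, norm_smul, norm_inv, norm_norm]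
    exact inv_mul_le_one
  rw [hscale]
  exact (sepCone n d).smul_mem (norm_nonneg D)
    (smul_one_add_mem_sepCone_of_norm_le_one hherm hnorm)

lemma mem_SEP_of_mul_norm_sub_le {X : Matrix (Fin n × Fin d) (Fin n × Fin d) ℂ} {m : ℝ}
    (hX : X.IsHermitian) (hm : n * ‖X - m • 1‖ ≤ m) : X ∈ SEP n d := by
  have hD : (X - m • 1).IsHermitian := hX.sub (by simp [IsHermitian])
  have hsplit : X = (m - n * ‖X - m • 1‖) • 1 + ((n * ‖X - m • 1‖) • 1 + (X - m • 1)) := by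
    module
  rw [hsplit]
  exact (sepCone n d).add_mem ((sepCone n d).smul_mem (sub_nonneg.2 hm) one_mem_sepCone)
    (mul_norm_smul_one_add_mem_sepCone hD)

end Separable

lemma msupport_SC_subset_closedBall (m σ : ℝ) :
    msupport (SC m σ) ⊆ Metric.closedBall m (2 * σ) := by
  rw [Real.closedBall_eq_Icc]
  intro x hx
  by_contra hmem
  refine (hx _ isClosed_Icc.isOpen_compl hmem).ne' ?_
  rw [SC, withDensity_apply _ measurableSet_Icc.compl]
  refine setLIntegral_eq_zero measurableSet_Icc.compl fun y hy => ?_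
  simp [Set.indicator_of_notMem hy]

lemma opNorm_eq_norm {N : Type*} [Fintype N] [DecidableEq N] (A : Matrix N N ℂ) :
    opNorm A = ‖A‖ :=
  l2_opNorm_toEuclideanCLM A

lemma StrongConv.ae_tendsto_norm_sub {Ω : Type*} [MeasurableSpace Ω] {ℙ : Measure Ω} {n : ℕ}
    {Y : (d : ℕ) → Ω → Matrix (Fin n × Fin d) (Fin n × Fin d) ℂ} {μ : Measure ℝ}
    (hY : StrongConv ℙ n Y μ) (m : ℝ) :
    ∀ᵐ ω ∂ℙ, Tendsto (fun d => ‖Y d ω - m • 1‖) atTop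
      (𝓝 (sSup ((fun x => |x - m|) '' msupport μ))) := by
  filter_upwards [hY] with ω hω
  have hpoly (d : ℕ) : polyApply (X - C m) (Y d ω) = Y d ω - m • 1 := by
    simp [polyApply, Algebra.algebraMap_eq_smul_one]
  have hlim := (hω (X - C m)).2
  simp only [hpoly, opNorm_eq_norm, eval_sub, eval_X, eval_C] at hlim
  exact hlim

lemma tendsto_measure_of_ae_eventually_mem {Ω ι : Type*} [MeasurableSpace Ω] {ℙ : Measure Ω}
    [Preorder ι] [IsDirectedOrder ι] [Nonempty ι] [(atTop : Filter ι).IsCountablyGenerated]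
    {S : ι → Set Ω} (hS : ∀ᵐ ω ∂ℙ, ∀ᶠ i in atTop, ω ∈ S i) :
    Tendsto (fun i => ℙ (S i)) atTop (𝓝 (ℙ Set.univ)) := by
  let T (i : ι) : Set Ω := {ω | ∀ k ≥ i, ω ∈ S k}
  have hT : Monotone T := fun i j hij ω hω k hk => hω k (hij.trans hk)
  have hU : ℙ (⋃ i, T i) = ℙ Set.univ := by
    refine measure_congr (eventuallyEq_univ.2 ?_)
    filter_upwards [hS] with ω hω
    exact Set.mem_iUnion.2 (eventually_atTop.1 hω)
  have hlim : Tendsto (fun i => ℙ (T i)) atTop (𝓝 (ℙ Set.univ)) :=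
    hU ▸ tendsto_measure_iUnion_atTop hT
  exact tendsto_of_tendsto_of_tendsto_of_le_of_le hlim tendsto_const_nhds
    (fun i => measure_mono fun _ hω => hω i le_rfl) fun i => measure_mono (Set.subset_univ _)

lemma mul_lt_one_of_lt_threshold {n : ℕ} (hn : 2 ≤ n) {α : ℝ} (hα : 0 < α)
    (hα2 : n = 2 → α < 1 / Real.sqrt 5)
    (hα3 : 3 ≤ n → α < (n : ℝ) / Real.sqrt ((n : ℝ) ^ 4 + 2 * (n : ℝ) ^ 3 - 2 * n)) :
    n * α < 1 := by
  obtain rfl | hn3 := hn.eq_or_lt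
  · have hsqrt : (2 : ℝ) ≤ Real.sqrt 5 := Real.le_sqrt_of_sq_le (by norm_num)
    have hmul := (lt_div_iff₀ (by positivity)).1 (hα2 rfl)
    push_cast
    nlinarith
  · have hn' : (3 : ℝ) ≤ n := by exact_mod_cast hn3
    have hsqrt : (n : ℝ) ^ 2 ≤ Real.sqrt ((n : ℝ) ^ 4 + 2 * (n : ℝ) ^ 3 - 2 * n) :=
      Real.le_sqrt_of_sq_le (by nlinarith [mul_self_nonneg ((n : ℝ) ^ 2 - 1)])
    have hmul := (lt_div_iff₀ (lt_of_lt_of_le (by positivity) hsqrt)).1 (hα3 hn3)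
    nlinarith

theorem stmt10_general
    {Ω : Type*} [MeasurableSpace Ω] (ℙ : Measure Ω) [IsProbabilityMeasure ℙ]
    (n : ℕ) (m r : ℝ) (hr : 0 ≤ r) (hnr : n * r < m)
    (Y : (d : ℕ) → Ω → Matrix (Fin n × Fin d) (Fin n × Fin d) ℂ)
    (hherm : ∀ d ω, (Y d ω).IsHermitian)
    (μ : Measure ℝ) (hμ : msupport μ ⊆ Metric.closedBall m r)
    (hconv : StrongConv ℙ n Y μ) :
    (∀ᵐ ω ∂ℙ, ∀ᶠ d : ℕ in atTop, Y d ω ∈ SEP n d) ∧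
      Tendsto (fun d : ℕ => ℙ {ω | Y d ω ∈ SEP n d}) atTop (𝓝 1) := by
  have hsup : n * sSup ((fun x => |x - m|) '' msupport μ) < m := by
    refine (mul_le_mul_of_nonneg_left (Real.sSup_le ?_ hr) n.cast_nonneg).trans_lt hnr
    exact Set.forall_mem_image.2 fun x hx => hμ hx
  have hae : ∀ᵐ ω ∂ℙ, ∀ᶠ d : ℕ in atTop, Y d ω ∈ SEP n d := by
    filter_upwards [hconv.ae_tendsto_norm_sub m] with ω hω
    filter_upwards [(hω.const_mul (n : ℝ)).eventually_lt_const hsup] with d hd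
    exact mem_SEP_of_mul_norm_sub_le (hherm d ω) hd.le
  exact ⟨hae, measure_univ (μ := ℙ) ▸ tendsto_measure_of_ae_eventually_mem hae⟩

/-- shifted semicircular ensembles `SC_{2,α}` are asymptotically
separable when `α < 1/√5` (for `n = 2`) or `α < n/√(n⁴+2n³−2n)` (for `n ≥ 3`). -/
theorem stmt10
    {Ω : Type*} [MeasurableSpace Ω] (ℙ : Measure Ω) [IsProbabilityMeasure ℙ]
    (n : ℕ) (hn : 2 ≤ n) (α : ℝ) (hα : 0 < α)
    (hα2 : n = 2 → α < 1 / Real.sqrt 5)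
    (hα3 : 3 ≤ n → α < (n : ℝ) / Real.sqrt ((n : ℝ) ^ 4 + 2 * (n : ℝ) ^ 3 - 2 * n))
    (Y : (d : ℕ) → Ω → Matrix (Fin n × Fin d) (Fin n × Fin d) ℂ)
    (hmeas : ∀ d, Measurable (Y d))
    (hherm : ∀ d ω, (Y d ω).IsHermitian)
    (hUI : UnitInv ℙ n Y)
    (hconv : StrongConv ℙ n Y (SC 2 α)) :
    (∀ᵐ ω ∂ℙ, ∀ᶠ d : ℕ in atTop, Y d ω ∈ SEP n d) ∧
      Tendsto (fun d : ℕ => ℙ {ω | Y d ω ∈ SEP n d}) atTop (𝓝 1) := by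
  have hnα := mul_lt_one_of_lt_threshold hn hα hα2 hα3
  exact stmt10_general ℙ n 2 (2 * α) (by positivity) (by linarith) Y hherm (SC 2 α)
    (msupport_SC_subset_closedBall 2 α) hconv
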